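/- arXiv:1602.02011 — 2 statements merged into one kernel-verified Lean document; each statement's English description precedes it below -/
import Mathlib

section
/- Let α > 0, ω ∈ ℝ, N ≥ 1, and 0 < u₁ < ⋯ < u_N. Let 𝐖 be the N×N matrix with entries 𝐖_{ij} = W(uᵢ,uⱼ), let t > u_N, let w(t) ∈ ℝ^N have components w(t)_j = W(t, u_j), and define the hedge coefficient vector β := 𝐖⁻¹ w(t) (equivalently, β' = w(t)' 𝐖⁻¹ by symmetry). Then for every i ∈ {1, …, N}, βᵢ is nonzero with sign(βᵢ) = (−1)^{N−i}: β_N > 0, β_{N−1} < 0, β_{N−2} > 0, and so on. (Theorem 2 of the paper: every Smith–Wilson replicating portfolio for a cash flow beyond the Last Liquid Point has alternating long and short positions.) -/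
/-!
After removing the factors `e^{-ω u}` and rescaling the tenors by `α`, the kernel becomes
`k(s,x) = min s x - e^{-max s x} sinh (min s x)`. As a function of `x` it is `C²`, solves
`k'''' = k''` away from `x = s`, its third derivative jumps by `1` at `x = s`, and it satisfies
`k = k'' = 0` at `x = 0` and `k' + k'' = 0`, `k''' = -k''` for `x ≥ s`.

If `W c = τ w(t)`, then `f = τ e^{-ωt} k(αt,·) - ∑ cᵢ e^{-ωuᵢ} k(αuᵢ,·)` vanishes at `0` and at every
`αuᵢ`, and up to the factors `e^{-ωu}` its coefficients are the jumps of `f'''` at the knots.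
Solving `f'''' = f''` explicitly on an interval `[p,q]` with `f(p) = f(q) = 0` shows: if `f'(p) > 0`
and `f''(p) ≥ 0`, then `f'''(p+) < 0` while `f'(q)`, `f''(q)`, `f'''(q-)` are all negative
(`interior_step`). Walking from `0` through the knots, these signs flip at every knot, so the jumps
of `f'''` strictly alternate; the last knot is handled by the decay condition `f' + f'' = 0`
(`last_step`). If `f'(0) = 0`, the same recursion gives `f = 0`. This dichotomy is
`jumps_alternate_or_vanish`. With `τ = 0` it yields invertibility of `W`, with `τ = 1` the
alternation of the hedge coefficients.
-/

/-- The Wilson kernel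
`W(s,t) = e^{-ω(s+t)} (α min(s,t) − e^{-α max(s,t)} sinh(α min(s,t)))`. -/
noncomputable def Wker (α ω s t : ℝ) : ℝ :=
  Real.exp (-(ω * (s + t))) *
    (α * min s t - Real.exp (-(α * max s t)) * Real.sinh (α * min s t))

lemma sinh_lt_mul_cosh {x : ℝ} (hx : 0 < x) : Real.sinh x < x * Real.cosh x := by
  have hd : ∀ y : ℝ, HasDerivAt (fun y => y * Real.cosh y - Real.sinh y) (y * Real.sinh y) y := by
    intro y
    have h := ((hasDerivAt_id y).mul (Real.hasDerivAt_cosh y)).sub (Real.hasDerivAt_sinh y)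
    exact h.congr_deriv (by simp only [id]; ring)
  have hmono : StrictMonoOn (fun y => y * Real.cosh y - Real.sinh y) (Set.Ici (0 : ℝ)) := by
    apply strictMonoOn_of_deriv_pos (convex_Ici 0)
    · exact fun y _ => (hd y).continuousAt.continuousWithinAt
    · intro y hy
      rw [interior_Ici, Set.mem_Ioi] at hy
      rw [(hd y).deriv]
      exact mul_pos hy (Real.sinh_pos_iff.2 hy)
  have h := hmono (Set.mem_Ici.2 le_rfl) (Set.mem_Ici.2 hx.le) hx
  simp at h
  linarith

lemma two_mul_cosh_sub_one_lt {x : ℝ} (hx : 0 < x) :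
    2 * (Real.cosh x - 1) < x * Real.sinh x := by
  -- with `y = x / 2` the claim reads `4 sinh² y < 4 y sinh y cosh y`
  obtain ⟨y, rfl⟩ : ∃ y, x = 2 * y := ⟨x / 2, by ring⟩
  have hy : 0 < y := by linarith
  rw [Real.cosh_two_mul, Real.sinh_two_mul, Real.cosh_sq]
  nlinarith [mul_lt_mul_of_pos_left (sinh_lt_mul_cosh hy) (Real.sinh_pos_iff.2 hy)]

/-- Sign propagation across an interval of length `x` on which `f'''' = f''`, where `f` vanishes at
both ends and `D, G, b` are the values of `f', f'', f'''` at the left end. The conclusions concern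
`f'''` at the left end and `f', f'', f'''` at the right end. -/
lemma interior_step {x D G b : ℝ} (hx : 0 < x) (hD : 0 < D) (hG : 0 ≤ G)
    (h : x * D + (Real.cosh x - 1) * G + (Real.sinh x - x) * b = 0) :
    b < 0 ∧ D + Real.sinh x * G + (Real.cosh x - 1) * b < 0 ∧
      Real.cosh x * G + Real.sinh x * b < 0 ∧ Real.sinh x * G + Real.cosh x * b < 0 := by
  have h1 := sinh_lt_mul_cosh hx
  have h2 := two_mul_cosh_sub_one_lt hx
  have h3 : 0 < Real.sinh x - x := by linarith [Real.self_lt_sinh_iff.2 hx]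
  have h4 := Real.one_lt_cosh.2 hx.ne'
  have h5 := Real.cosh_sq x
  generalize Real.sinh x = S at *
  generalize Real.cosh x = C at *
  have hS : 0 < S := by linarith
  have hxD := mul_pos hx hD
  -- each quantity, multiplied by `sinh x - x > 0`, becomes a combination of `D` and `G` with
  -- coefficients of known sign
  refine ⟨?_, ?_, ?_, ?_⟩
  · refine (pos_iff_neg_of_mul_neg ?_).1 h3
    nlinarith [mul_nonneg (sub_nonneg.2 h4.le) hG]
  · refine (pos_iff_neg_of_mul_neg ?_).1 h3
    have e : (S - x) * (D + S * G + (C - 1) * b)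
        = (S - x * C) * D + (2 * (C - 1) - x * S) * G := by
      linear_combination (C - 1) * h - G * h5
    rw [e]
    nlinarith [mul_pos (sub_pos.2 h1) hD, mul_nonneg (sub_pos.2 h2).le hG]
  · refine (pos_iff_neg_of_mul_neg ?_).1 h3
    have e : (S - x) * (C * G + S * b) = (S - x * C) * G - S * (x * D) := by
      linear_combination S * h
    rw [e]
    nlinarith [mul_pos hS hxD, mul_nonneg (sub_pos.2 h1).le hG]
  · refine (pos_iff_neg_of_mul_neg ?_).1 h3
    have e : (S - x) * (S * G + C * b) = (C - 1 - x * S) * G - C * (x * D) := by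
      linear_combination C * h - G * h5
    rw [e]
    have h6 : 0 ≤ x * S - (C - 1) := by linarith
    nlinarith [mul_pos (zero_lt_one.trans h4) hxD, mul_nonneg h6 hG]

/-- Sign propagation across the last interval, where vanishing of `f` at the right end is replaced
by `f' + f'' = 0` there. -/
lemma last_step {x D G b : ℝ} (hx : 0 < x) (hD : 0 < D) (hG : 0 ≤ G)
    (h : (D + Real.sinh x * G + (Real.cosh x - 1) * b)
      + (Real.cosh x * G + Real.sinh x * b) = 0) :
    b < 0 ∧ Real.cosh x * G + Real.sinh x * b < 0 ∧ Real.sinh x * G + Real.cosh x * b < 0 := by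
  have hS := Real.sinh_pos_iff.2 hx
  have h4 := Real.one_lt_cosh.2 hx.ne'
  have h5 := Real.cosh_sq x
  generalize Real.sinh x = S at *
  generalize Real.cosh x = C at *
  have h3 : 0 < C + S - 1 := by linarith
  refine ⟨?_, ?_, ?_⟩
  · refine (pos_iff_neg_of_mul_neg ?_).1 h3
    have e : (C + S - 1) * b = -D - (S + C) * G := by linear_combination h
    rw [e]
    nlinarith [mul_nonneg (by linarith : 0 ≤ S + C) hG]
  · refine (pos_iff_neg_of_mul_neg ?_).1 h3
    have e : (C + S - 1) * (C * G + S * b) = -(C - 1) * G - S * D := by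
      linear_combination S * h + G * h5
    rw [e]
    nlinarith [mul_pos hS hD, mul_nonneg (sub_pos.2 h4).le hG]
  · refine (pos_iff_neg_of_mul_neg ?_).1 h3
    have e : (C + S - 1) * (S * G + C * b) = -(1 + S) * G - C * D := by
      linear_combination C * h - G * h5
    rw [e]
    nlinarith [mul_pos (zero_lt_one.trans h4) hD, mul_nonneg (by linarith : 0 ≤ 1 + S) hG]

/-- The dichotomy in terms of the knot data only: `F, D, G` are the values of `f, f', f''` at the
knots (knot `0` being the origin), `B` and `M` the right and left limits of `f'''`, `x j` the
distance from knot `j` to knot `j + 1`, and `γ j` the jump of `f'''` at knot `j + 1`. -/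
lemma jumps_alternate_or_vanish (n : ℕ) (x F D G B M γ : ℕ → ℝ)
    (hx : ∀ j, 0 < x j)
    (hF0 : ∀ j ≤ n, F j = 0)
    (hG0 : G 0 = 0)
    (hF : ∀ j, F (j + 1) = F j + x j * D j + (Real.cosh (x j) - 1) * G j
      + (Real.sinh (x j) - x j) * B j)
    (hD : ∀ j, D (j + 1) = D j + Real.sinh (x j) * G j + (Real.cosh (x j) - 1) * B j)
    (hG : ∀ j, G (j + 1) = Real.cosh (x j) * G j + Real.sinh (x j) * B j)
    (hM : ∀ j, M (j + 1) = Real.sinh (x j) * G j + Real.cosh (x j) * B j)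
    (hγ : ∀ j ≤ n, B (j + 1) = M (j + 1) + γ j)
    (hend : D (n + 1) + G (n + 1) = 0) (hBend : B (n + 1) = - G (n + 1)) :
    (∀ k ≤ n, γ k = 0) ∨ ∃ σ : ℝ, ∀ k ≤ n, 0 < σ * (-1) ^ k * γ k := by
  by_cases hD0 : D 0 = 0
  · left
    have hz : ∀ j ≤ n, D j = 0 ∧ G j = 0 ∧ (j ≠ 0 → M j = 0) := by
      intro j
      induction j with
      | zero => intro _; exact ⟨hD0, hG0, fun h => absurd rfl h⟩
      | succ j ih =>
        intro hj
        obtain ⟨h1, h2, _⟩ := ih (by omega)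
        have hb : (Real.sinh (x j) - x j) * B j = 0 := by
          have h := hF j
          rw [hF0 _ hj, hF0 j (by omega), h1, h2] at h
          linarith
        have hB : B j = 0 := (mul_eq_zero.1 hb).resolve_left
          (by linarith [Real.self_lt_sinh_iff.2 (hx j)])
        simp [hD, hG, hM, h1, h2, hB]
    have hBz : ∀ j ≤ n, B j = 0 := by
      intro j hj
      obtain ⟨h1, h2, _⟩ := hz j hj
      have hS := Real.sinh_pos_iff.2 (hx j)
      rcases hj.lt_or_eq with hlt | rfl
      · have h := hF j
        rw [hF0 _ (by omega : j + 1 ≤ n), hF0 j hj, h1, h2] at h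
        have hb : (Real.sinh (x j) - x j) * B j = 0 := by linarith
        exact (mul_eq_zero.1 hb).resolve_left
          (by linarith [Real.self_lt_sinh_iff.2 (hx j)])
      · have hC := Real.one_lt_cosh.2 (hx j).ne'
        rw [hD, hG, h1, h2] at hend
        have hb : (Real.cosh (x j) - 1 + Real.sinh (x j)) * B j = 0 := by linarith
        exact (mul_eq_zero.1 hb).resolve_left (by linarith)
    intro k hk
    obtain ⟨h1, h2, _⟩ := hz k hk
    have h3 := hBz k hk
    have hM' : M (k + 1) = 0 := by rw [hM, h2, h3]; ring
    have hB' : B (k + 1) = 0 := by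
      rcases hk.lt_or_eq with hlt | rfl
      · exact hBz _ hlt
      · rw [hBend, hG, h2, h3]; ring
    have := hγ k hk
    linarith
  · right
    refine ⟨D 0, ?_⟩
    -- multiplying by `τ = D 0 * (-1) ^ j` normalises the signs at knot `j`
    have hscale : ∀ (τ : ℝ) (j : ℕ), j < n →
        x j * (τ * D j) + (Real.cosh (x j) - 1) * (τ * G j)
          + (Real.sinh (x j) - x j) * (τ * B j) = 0 := by
      intro τ j hj
      have h := hF j
      rw [hF0 _ (by omega : j + 1 ≤ n), hF0 j hj.le] at h
      linear_combination -τ * h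
    have hz : ∀ j ≤ n, 0 < D 0 * (-1) ^ j * D j ∧ 0 ≤ D 0 * (-1) ^ j * G j ∧
        (j ≠ 0 → 0 < D 0 * (-1) ^ j * M j) := by
      intro j
      induction j with
      | zero =>
        intro _
        refine ⟨?_, by simp [hG0], fun h => absurd rfl h⟩
        simpa using mul_self_pos.2 hD0
      | succ j ih =>
        intro hj
        obtain ⟨h1, h2, _⟩ := ih (by omega)
        obtain ⟨_, k2, k3, k4⟩ := interior_step (hx j) h1 h2 (hscale _ j (by omega))
        rw [hD, hG, hM, pow_succ]
        refine ⟨?_, ?_, fun _ => ?_⟩ <;> linarith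
    have hlast : ∀ τ : ℝ,
        (τ * D n + Real.sinh (x n) * (τ * G n) + (Real.cosh (x n) - 1) * (τ * B n))
          + (Real.cosh (x n) * (τ * G n) + Real.sinh (x n) * (τ * B n)) = 0 := by
      intro τ
      rw [hD, hG] at hend
      linear_combination τ * hend
    have hBneg : ∀ j ≤ n, D 0 * (-1) ^ j * B j < 0 := by
      intro j hj
      obtain ⟨h1, h2, _⟩ := hz j hj
      rcases hj.lt_or_eq with hlt | rfl
      · exact (interior_step (hx j) h1 h2 (hscale _ j hlt)).1
      · exact (last_step (hx j) h1 h2 (hlast _)).1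
    intro k hk
    rcases hk.lt_or_eq with hlt | rfl
    · have h1 := (hz (k + 1) hlt).2.2 (by omega)
      have h2 := hBneg (k + 1) hlt
      have h3 := hγ k hk
      rw [h3, pow_succ] at h2
      rw [pow_succ] at h1
      linarith
    · obtain ⟨h1, h2, _⟩ := hz k le_rfl
      obtain ⟨_, k2, k3⟩ := last_step (hx k) h1 h2 (hlast _)
      have h3 := hγ k le_rfl
      rw [hBend, hG, hM] at h3
      have h4 : γ k = -(Real.cosh (x k) * G k + Real.sinh (x k) * B k)
        - (Real.sinh (x k) * G k + Real.cosh (x k) * B k) := by linarith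
      rw [h4]
      linarith

/-- The Wilson kernel with `α = 1`, `ω = 0`. -/
noncomputable def ker0 (s x : ℝ) : ℝ := min s x - Real.exp (-max s x) * Real.sinh (min s x)

/-- The derivative of `ker0 s` in `x`. -/
noncomputable def ker1 (s x : ℝ) : ℝ :=
  if s ≤ x then Real.exp (-x) * Real.sinh s else 1 - Real.exp (-s) * Real.cosh x

/-- The second derivative of `ker0 s` in `x`. -/
noncomputable def ker2 (s x : ℝ) : ℝ :=
  if s ≤ x then -(Real.exp (-x) * Real.sinh s) else -(Real.exp (-s) * Real.sinh x)

/-- The right limit at `x` of the third derivative of `ker0 s`. -/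
noncomputable def ker3Right (s x : ℝ) : ℝ :=
  if s ≤ x then Real.exp (-x) * Real.sinh s else -(Real.exp (-s) * Real.cosh x)

/-- The left limit at `x` of the third derivative of `ker0 s`. -/
noncomputable def ker3Left (s x : ℝ) : ℝ :=
  if s < x then Real.exp (-x) * Real.sinh s else -(Real.exp (-s) * Real.cosh x)

lemma exp_neg_mul_cosh_add_sinh (y : ℝ) :
    Real.exp (-y) * (Real.cosh y + Real.sinh y) = 1 := by
  rw [Real.cosh_add_sinh, ← Real.exp_add]; simp

lemma ker3Right_eq (s x : ℝ) :
    ker3Right s x = ker3Left s x + if s = x then 1 else 0 := by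
  unfold ker3Right ker3Left
  rcases lt_trichotomy s x with h | rfl | h
  · simp [h, h.le, h.ne]
  · simp only [le_refl, lt_irrefl, if_true, if_false]
    linarith [exp_neg_mul_cosh_add_sinh s]
  · simp [h.not_ge, h.not_gt, h.ne']

/-- Transport of the derivatives of `ker0 s` across an interval `[x, x + d]` with no knot in its
interior: the solution of `f'''' = f''` from its data at the left end. -/
lemma ker_transport {s x d : ℝ} (hd : 0 < d) (h : s ≤ x ∨ x + d ≤ s) :
    ker0 s (x + d) = ker0 s x + d * ker1 s x + (Real.cosh d - 1) * ker2 s x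
        + (Real.sinh d - d) * ker3Right s x ∧
    ker1 s (x + d) = ker1 s x + Real.sinh d * ker2 s x + (Real.cosh d - 1) * ker3Right s x ∧
    ker2 s (x + d) = Real.cosh d * ker2 s x + Real.sinh d * ker3Right s x ∧
    ker3Left s (x + d) = Real.sinh d * ker2 s x + Real.cosh d * ker3Right s x := by
  unfold ker0 ker1 ker2 ker3Right ker3Left
  have he : Real.exp (-(x + d)) = Real.exp (-x) * (Real.cosh d - Real.sinh d) := by
    rw [Real.cosh_sub_sinh, ← Real.exp_add]; ring_nf
  rcases h with h | h
  · have h1 : s ≤ x + d := by linarith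
    have h2 : s < x + d := by linarith
    simp only [h, h1, h2, if_true, min_eq_left, max_eq_right, he]
    refine ⟨?_, ?_, ?_, ?_⟩ <;> ring
  · have h1 : ¬ s ≤ x := by linarith
    have h2 : ¬ s < x + d := by linarith
    have h3 : x ≤ s := by linarith
    simp only [h, h1, h2, h3, if_false, min_eq_right, max_eq_left]
    have hs := exp_neg_mul_cosh_add_sinh s
    rcases h.lt_or_eq with h4 | h4
    · have h5 : ¬ s ≤ x + d := by linarith
      simp only [h5, if_false, Real.sinh_add, Real.cosh_add]
      refine ⟨?_, ?_, ?_, ?_⟩ <;> ring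
    · -- at `s = x + d` both branches of the first derivative agree
      have h5 : s ≤ x + d := by linarith
      subst h4
      simp only [le_refl, if_true]
      rw [Real.sinh_add, Real.cosh_add] at *
      refine ⟨?_, ?_, ?_, ?_⟩
      · ring
      · linear_combination hs
      · ring
      · ring

lemma Wker_eq (α ω s t : ℝ) (hα : 0 < α) :
    Wker α ω s t = Real.exp (-(ω * s)) * Real.exp (-(ω * t)) * ker0 (α * s) (α * t) := by
  unfold Wker ker0
  rw [← Real.exp_add, mul_min_of_nonneg _ _ hα.le, mul_max_of_nonneg _ _ hα.le]
  ring_nf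

lemma Wker_comm (α ω s t : ℝ) : Wker α ω s t = Wker α ω t s := by
  unfold Wker
  rw [min_comm, max_comm, add_comm]

/-- The dichotomy for a kernel combination with knots `p 1 < ⋯ < p (n + 1)` that vanishes at
`p 1, …, p n`, where `p 0 = 0`. -/
lemma coeff_alternate_or_vanish (n : ℕ) (p γ : ℕ → ℝ) (hp0 : p 0 = 0) (hp : StrictMono p)
    (h : ∀ j < n, ∑ k ∈ Finset.range (n + 1), γ k * ker0 (p (k + 1)) (p (j + 1)) = 0) :
    (∀ k ≤ n, γ k = 0) ∨ ∃ σ : ℝ, ∀ k ≤ n, 0 < σ * (-1) ^ k * γ k := by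
  have hpos : ∀ k, 0 < p (k + 1) := fun k => hp0 ▸ hp (Nat.succ_pos k)
  have htr := fun k j => ker_transport (s := p (k + 1)) (x := p j) (d := p (j + 1) - p j)
    (sub_pos.2 (hp (Nat.lt_succ_self j))) (by
      rw [add_sub_cancel, hp.le_iff_le, hp.le_iff_le]; omega)
  simp only [add_sub_cancel] at htr
  have hlin : ∀ k ∈ Finset.range (n + 1), p (k + 1) ≤ p (n + 1) := by
    intro k hk
    rw [Finset.mem_range] at hk
    exact hp.monotone (by omega)
  apply jumps_alternate_or_vanish n (fun j => p (j + 1) - p j)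
    (fun j => ∑ k ∈ Finset.range (n + 1), γ k * ker0 (p (k + 1)) (p j))
    (fun j => ∑ k ∈ Finset.range (n + 1), γ k * ker1 (p (k + 1)) (p j))
    (fun j => ∑ k ∈ Finset.range (n + 1), γ k * ker2 (p (k + 1)) (p j))
    (fun j => ∑ k ∈ Finset.range (n + 1), γ k * ker3Right (p (k + 1)) (p j))
    (fun j => ∑ k ∈ Finset.range (n + 1), γ k * ker3Left (p (k + 1)) (p j))
  · exact fun j => sub_pos.2 (hp (Nat.lt_succ_self j))
  · intro j hj
    cases j with
    | zero =>
      refine Finset.sum_eq_zero fun k _ => ?_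
      simp [hp0, ker0, (hpos k).le]
    | succ j => exact h j hj
  · refine Finset.sum_eq_zero fun k _ => ?_
    simp [hp0, ker2, (hpos k).not_ge]
  · intro j
    simp only [Finset.mul_sum, ← Finset.sum_add_distrib]
    refine Finset.sum_congr rfl fun k _ => ?_
    rw [(htr k j).1]; ring
  · intro j
    simp only [Finset.mul_sum, ← Finset.sum_add_distrib]
    refine Finset.sum_congr rfl fun k _ => ?_
    rw [(htr k j).2.1]; ring
  · intro j
    simp only [Finset.mul_sum, ← Finset.sum_add_distrib]
    refine Finset.sum_congr rfl fun k _ => ?_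
    rw [(htr k j).2.2.1]; ring
  · intro j
    simp only [Finset.mul_sum, ← Finset.sum_add_distrib]
    refine Finset.sum_congr rfl fun k _ => ?_
    rw [(htr k j).2.2.2]; ring
  · intro j hj
    have hj' : j < n + 1 := by omega
    simp only [ker3Right_eq, mul_add, Finset.sum_add_distrib, hp.injective.eq_iff,
      Nat.add_right_cancel_iff]
    simp [hj']
  · rw [← Finset.sum_add_distrib]
    refine Finset.sum_eq_zero fun k hk => ?_
    simp [ker1, ker2, hlin k hk]
  · rw [← Finset.sum_neg_distrib]
    refine Finset.sum_congr rfl fun k hk => ?_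
    simp [ker3Right, ker2, hlin k hk]

/-- The dichotomy for the linear system `W c = τ w(t)`. -/
lemma wilson_system_dichotomy (α ω : ℝ) (hα : 0 < α) (N : ℕ)
    (u : Fin N → ℝ) (hu0 : ∀ i, 0 < u i) (hu : StrictMono u)
    (t : ℝ) (ht0 : 0 < t) (ht : ∀ i, u i < t) (c : Fin N → ℝ) (τ : ℝ)
    (h : ∀ j, ∑ k, Wker α ω (u j) (u k) * c k = τ * Wker α ω t (u j)) :
    ((∀ k, c k = 0) ∧ τ = 0) ∨
      ∃ σ : ℝ, (∀ k : Fin N, 0 < σ * (-1) ^ (k : ℕ) * (-c k)) ∧ 0 < σ * (-1) ^ N * τ := by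
  -- the knots are `0, αu₁, …, αu_N, αt`, continued past `αt` so as to be strictly monotone on `ℕ`
  let v : ℕ → ℝ := fun k => if hk : k < N then u ⟨k, hk⟩ else t + (k - N : ℝ)
  let p : ℕ → ℝ := fun k => Nat.casesOn k 0 (fun k => α * v k)
  let γ : ℕ → ℝ := fun k => if hk : k < N then -(c ⟨k, hk⟩ * Real.exp (-(ω * u ⟨k, hk⟩)))
    else τ * Real.exp (-(ω * t))
  have hvN : v N = t := by simp [v]
  have hvk : ∀ k : Fin N, v k = u k := fun k => by simp [v]
  have hγN : γ N = τ * Real.exp (-(ω * t)) := by simp [γ]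
  have hγk : ∀ k : Fin N, γ k = -(c k * Real.exp (-(ω * u k))) := fun k => by simp [γ]
  have hv : ∀ k, v k < v (k + 1) := by
    intro k
    rcases lt_trichotomy (k + 1) N with hk | hk | hk
    · have hk' : k < N := by omega
      simp only [v, hk, hk', dif_pos]
      exact hu (by simp [Fin.lt_def])
    · have hk' : k < N := by omega
      rw [hk, hvN, hvk ⟨k, hk'⟩]
      exact ht _
    · have h1 : ¬ k + 1 < N := by omega
      have h2 : ¬ k < N := by omega
      simp only [v, h1, h2, dif_neg, not_false_eq_true]
      push_cast
      linarith
  have hv0 : 0 < v 0 := by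
    by_cases hN : 0 < N
    · simpa [v, hN] using hu0 ⟨0, hN⟩
    · obtain rfl : N = 0 := by omega
      rw [hvN]; exact ht0
  have hp : StrictMono p := by
    refine strictMono_nat_of_lt_succ fun k => ?_
    cases k with
    | zero => exact mul_pos hα hv0
    | succ k => exact mul_lt_mul_of_pos_left (hv k) hα
  have hsum : ∀ j < N,
      ∑ k ∈ Finset.range (N + 1), γ k * ker0 (p (k + 1)) (p (j + 1)) = 0 := by
    intro j hj
    have hj' := h ⟨j, hj⟩
    change ∑ k ∈ Finset.range (N + 1), γ k * ker0 (α * v k) (α * v j) = 0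
    rw [Finset.sum_range_succ, ← Fin.sum_univ_eq_sum_range
      (fun k => γ k * ker0 (α * v k) (α * v j)) N]
    have hvj : v j = u ⟨j, hj⟩ := hvk ⟨j, hj⟩
    simp only [hvk, hγk, hvN, hγN, hvj]
    have hE := (Real.exp_pos (-(ω * u ⟨j, hj⟩))).ne'
    apply mul_left_cancel₀ hE
    rw [mul_zero, mul_add, Finset.mul_sum]
    have e1 : ∀ k : Fin N, Real.exp (-(ω * u ⟨j, hj⟩)) *
        (-(c k * Real.exp (-(ω * u k))) * ker0 (α * u k) (α * u ⟨j, hj⟩))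
        = -(Wker α ω (u ⟨j, hj⟩) (u k) * c k) := by
      intro k
      rw [Wker_comm, Wker_eq _ _ _ _ hα]; ring
    simp only [e1, Finset.sum_neg_distrib]
    rw [hj', Wker_eq _ _ _ _ hα]; ring
  rcases coeff_alternate_or_vanish N p γ rfl hp hsum with h0 | ⟨σ, hσ⟩
  · left
    refine ⟨fun k => ?_, ?_⟩
    · have := h0 k k.2.le
      rw [hγk] at this
      simpa [(Real.exp_pos _).ne'] using this
    · have := h0 N le_rfl
      rw [hγN] at this
      simpa [(Real.exp_pos _).ne'] using this
  · right
    refine ⟨σ, fun k => ?_, ?_⟩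
    · have := hσ k k.2.le
      rw [hγk] at this
      refine pos_of_mul_pos_left (b := Real.exp (-(ω * u k))) ?_ (Real.exp_pos _).le
      linarith
    · have := hσ N le_rfl
      rw [hγN] at this
      refine pos_of_mul_pos_left (b := Real.exp (-(ω * t))) ?_ (Real.exp_pos _).le
      linarith

/-- Theorem 2 of the paper (alternating hedge coefficients): for `α > 0`, `ω ∈ ℝ`,
tenors `0 < u₁ < ⋯ < u_N` and a maturity `t` beyond the Last Liquid Point
(`t > uᵢ` for all `i`, i.e. `t > u_N`), the hedge coefficient vector
`β := 𝐖⁻¹ w(t)`, where `𝐖 = (W(uᵢ,uⱼ))` and `w(t)ⱼ = W(t,uⱼ)`, satisfies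
`sign(βᵢ) = (−1)^{N−i}` (1-indexed): with 0-indexed `i`, `(−1)^{N−1−i} βᵢ > 0`,
so `β_N > 0`, `β_{N−1} < 0`, `β_{N−2} > 0`, and so on. -/
theorem smith_wilson_hedge_coefficients_alternate (α ω : ℝ) (hα : 0 < α)
    (N : ℕ) (hN : 1 ≤ N)
    (u : Fin N → ℝ) (hu0 : ∀ i, 0 < u i) (hu : StrictMono u)
    (t : ℝ) (ht : ∀ i, u i < t) :
    ∀ i : Fin N,
      0 < (-1 : ℝ) ^ (N - 1 - (i : ℕ)) *
        ((Matrix.of fun i j : Fin N => Wker α ω (u i) (u j))⁻¹.mulVec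
          (fun j => Wker α ω t (u j))) i := by
  have ht0 : 0 < t := (hu0 ⟨0, hN⟩).trans (ht _)
  set A : Matrix (Fin N) (Fin N) ℝ := Matrix.of fun i j : Fin N => Wker α ω (u i) (u j) with hA
  have hdet : A.det ≠ 0 := by
    intro h0
    obtain ⟨c, hc, hAc⟩ := Matrix.exists_mulVec_eq_zero_iff.2 h0
    rcases wilson_system_dichotomy α ω hα N u hu0 hu t ht0 ht c 0
      (fun j => by simpa [hA, Matrix.mulVec, dotProduct] using congrFun hAc j) with h | ⟨σ, _, h⟩
    · exact hc (funext h.1)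
    · simp at h
  set β := A⁻¹.mulVec (fun j => Wker α ω t (u j)) with hβ
  have hAβ : A.mulVec β = fun j => Wker α ω t (u j) := by
    rw [hβ, Matrix.mulVec_mulVec, Matrix.mul_nonsing_inv _ (isUnit_iff_ne_zero.2 hdet),
      Matrix.one_mulVec]
  rcases wilson_system_dichotomy α ω hα N u hu0 hu t ht0 ht β 1
    (fun j => by simpa [hA, Matrix.mulVec, dotProduct] using congrFun hAβ j) with h | ⟨σ, h1, h2⟩
  · exact absurd h.2 one_ne_zero
  intro i
  have hN' : N = (N - 1 - (i : ℕ)) + i + 1 := by have := i.2; omega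
  have h3 := mul_pos h2 (h1 i)
  have e : σ * (-1) ^ N * 1 * (σ * (-1) ^ (i : ℕ) * -β i)
      = σ ^ 2 * ((-1) ^ (N - 1 - (i : ℕ)) * β i) := by
    have hi : ((-1 : ℝ) ^ (i : ℕ)) * (-1) ^ (i : ℕ) = 1 := by
      rw [← mul_pow]; simp
    have hNp : (-1 : ℝ) ^ N = -((-1) ^ (N - 1 - (i : ℕ)) * (-1) ^ (i : ℕ)) := by
      conv_lhs => rw [hN', pow_succ, pow_add]
      ring
    rw [hNp]
    linear_combination σ ^ 2 * (-1) ^ (N - 1 - (i : ℕ)) * β i * hi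
  rw [e] at h3
  exact pos_of_mul_pos_right h3 (sq_nonneg σ)
end

section
/- Let α > 0, N ≥ 1, 0 < u₁ < ⋯ < u_{N+1}, and i ∈ {1, …, N}. Let s₁ < ⋯ < s_N be the points obtained from (u₁, …, u_{N+1}) by deleting uᵢ. Define the region A ⊆ ℝ^N × ℝ^N as the set of pairs of vectors (v, w) with 0 ≤ v₁ ≤ s₁ < v₂ ≤ s₂ < ⋯ < v_N ≤ s_N and 0 ≤ w₁ ≤ u₁ < w₂ ≤ u₂ < ⋯ < w_N ≤ u_N. Then det (H(s_k, u_l))_{k,l=1}^N = ∫_A det (K(v_k, w_l))_{k,l=1}^N dv dw, where the integral is with respect to 2N-dimensional Lebesgue measure. -/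
/-!
The region of integration is a product `∏ I_k × ∏ J_l` of intervals whose endpoints are consecutive
points of `0, s₁, …, s_N` and of `0, u₁, …, u_N`. By multilinearity of the determinant and Fubini
(`setIntegral_det_col`), integrating `det K(v_k, w_l)` over it gives the determinant of the matrix of
integrals of `K` over the rectangles `I_k × J_l`. Since `K = ∂_s ∂_t H` off the diagonal, each such
integral is a second difference of `H` (`integral_Pker`, `integral_Kker`). Finally, `H` vanishes when
one argument is `0`, so passing from `H(s_k, u_l)` to its second differences amounts to subtracting
from each row and each column the preceding one, which preserves the determinant.
-/

open MeasureTheory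

/-- The Ornstein–Uhlenbeck covariance kernel `K(s,t) = α² e^{-α max(s,t)} cosh(α min(s,t))`. -/
noncomputable def Kker (α s t : ℝ) : ℝ :=
  α ^ 2 * Real.exp (-(α * max s t)) * Real.cosh (α * min s t)

/-- The Wilson H-function `H(s,t) = α min(s,t) − e^{-α max(s,t)} sinh(α min(s,t))`. -/
noncomputable def Hker (α s t : ℝ) : ℝ :=
  α * min s t - Real.exp (-(α * max s t)) * Real.sinh (α * min s t)

/-- The partial derivative `∂H/∂s` of the Wilson function. -/
noncomputable def Pker (α s t : ℝ) : ℝ :=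
  if s ≤ t then α - α * Real.exp (-(α * t)) * Real.cosh (α * s)
  else α * Real.exp (-(α * s)) * Real.sinh (α * t)

/-- The two branches of `Pker` agree on the diagonal because `e^{-x}(cosh x + sinh x) = 1`. -/
lemma Pker_diag (α s : ℝ) :
    α - α * Real.exp (-(α * s)) * Real.cosh (α * s)
      = α * Real.exp (-(α * s)) * Real.sinh (α * s) := by
  have h : Real.exp (-(α * s)) * Real.exp (α * s) = 1 := by rw [← Real.exp_add]; simp
  rw [← Real.cosh_add_sinh (α * s)] at h
  linear_combination (-α) * h

lemma continuous_Pker_left (α t : ℝ) : Continuous fun s => Pker α s t := by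
  unfold Pker
  refine Continuous.if_le (by fun_prop) (by fun_prop) (by fun_prop) (by fun_prop) ?_
  rintro s rfl
  exact Pker_diag α s

lemma continuous_Pker_right (α s : ℝ) : Continuous fun t => Pker α s t := by
  unfold Pker
  refine Continuous.if_le (by fun_prop) (by fun_prop) (by fun_prop) (by fun_prop) ?_
  rintro t rfl
  exact Pker_diag α s

lemma continuous_Kker (α : ℝ) : Continuous fun p : ℝ × ℝ => Kker α p.1 p.2 := by
  unfold Kker
  fun_prop

lemma integral_Pker (α t a b : ℝ) :
    ∫ s in a..b, Pker α s t = Hker α b t - Hker α a t := by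
  refine MeasureTheory.integral_eq_of_hasDerivAt_off_countable (fun s => Hker α s t) _
    (Set.countable_singleton t) ?_ ?_ ((continuous_Pker_left α t).intervalIntegrable _ _)
  · unfold Hker
    fun_prop
  · rintro s ⟨-, hs⟩
    have hid : HasDerivAt (fun x : ℝ => α * x) α s := by
      simpa using (hasDerivAt_id s).const_mul α
    rcases lt_or_gt_of_ne (show s ≠ t from hs) with h | h
    · have hd := hid.sub ((hid.sinh).const_mul (Real.exp (-(α * t))))
      have he : (fun x => Hker α x t) =ᶠ[nhds s]
          fun x => α * x - Real.exp (-(α * t)) * Real.sinh (α * x) := by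
        filter_upwards [eventually_lt_nhds h] with x hx
        simp [Hker, min_eq_left (le_of_lt hx), max_eq_right (le_of_lt hx)]
      refine (hd.congr_of_eventuallyEq he).congr_deriv ?_
      simp only [Pker, if_pos h.le]
      ring
    · have hd := ((hid.fun_neg.exp).mul_const (Real.sinh (α * t))).const_sub (α * t)
      have he : (fun x => Hker α x t) =ᶠ[nhds s]
          fun x => α * t - Real.exp (-(α * x)) * Real.sinh (α * t) := by
        filter_upwards [eventually_gt_nhds h] with x hx
        simp [Hker, min_eq_right (le_of_lt hx), max_eq_left (le_of_lt hx)]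
      refine (hd.congr_of_eventuallyEq he).congr_deriv ?_
      simp only [Pker, if_neg (not_le.mpr h)]
      ring

lemma integral_Kker (α s c d : ℝ) :
    ∫ t in c..d, Kker α s t = Pker α s d - Pker α s c := by
  refine MeasureTheory.integral_eq_of_hasDerivAt_off_countable (fun t => Pker α s t) _
    (Set.countable_singleton s) (continuous_Pker_right α s).continuousOn ?_
    (((continuous_Kker α).comp (by fun_prop : Continuous fun t : ℝ => (s, t))).intervalIntegrable
      _ _)
  rintro t ⟨-, ht⟩
  have hid : HasDerivAt (fun x : ℝ => α * x) α t := by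
    simpa using (hasDerivAt_id t).const_mul α
  rcases lt_or_gt_of_ne (show t ≠ s from ht) with h | h
  · have hd := (hid.sinh).const_mul (α * Real.exp (-(α * s)))
    have he : (fun x => Pker α s x) =ᶠ[nhds t]
        fun x => α * Real.exp (-(α * s)) * Real.sinh (α * x) := by
      filter_upwards [eventually_lt_nhds h] with x hx
      simp only [Pker, if_neg (not_le.mpr hx)]
    refine (hd.congr_of_eventuallyEq he).congr_deriv ?_
    simp only [Kker, min_eq_right h.le, max_eq_left h.le]
    ring
  · have hd := (((hid.fun_neg.exp).const_mul α).mul_const (Real.cosh (α * s))).const_sub α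
    have he : (fun x => Pker α s x) =ᶠ[nhds t]
        fun x => α - α * Real.exp (-(α * x)) * Real.cosh (α * s) := by
      filter_upwards [eventually_gt_nhds h] with x hx
      simp only [Pker, if_pos (le_of_lt hx)]
    refine (hd.congr_of_eventuallyEq he).congr_deriv ?_
    simp only [Kker, min_eq_left h.le, max_eq_right h.le]
    ring

/-- If the `l`-th column of a matrix depends only on the `l`-th variable, then the determinant may be
integrated column by column. -/
lemma setIntegral_det_col {n : ℕ} (I : Fin n → Set ℝ) (f : Fin n → ℝ → ℝ)
    (hf : ∀ k l, IntegrableOn (f k) (I l)) :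
    ∫ w in Set.univ.pi I, (Matrix.of fun k l : Fin n => f k (w l)).det
      = (Matrix.of fun k l : Fin n => ∫ x in I l, f k x).det := by
  rw [volume_pi, Measure.restrict_pi_pi]
  simp only [Matrix.det_apply', Matrix.of_apply]
  rw [integral_finsetSum]
  · refine Finset.sum_congr rfl fun σ _ => ?_
    rw [integral_const_mul,
      integral_fintype_prod_eq_prod (μ := fun l => volume.restrict (I l)) fun l => f (σ l)]
  · intro σ _
    exact (Integrable.fintype_prod (f := fun l => f (σ l)) fun l => hf _ _).const_mul _

lemma setIntegral_det_row {n : ℕ} (I : Fin n → Set ℝ) (f : Fin n → ℝ → ℝ)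
    (hf : ∀ k l, IntegrableOn (f l) (I k)) :
    ∫ v in Set.univ.pi I, (Matrix.of fun k l : Fin n => f l (v k)).det
      = (Matrix.of fun k l : Fin n => ∫ x in I k, f l x).det := by
  rw [← Matrix.det_transpose (Matrix.of fun k l : Fin n => ∫ x in I k, f l x)]
  refine Eq.trans ?_ (setIntegral_det_col I f fun k l => hf l k)
  congr 1
  funext v
  rw [← Matrix.det_transpose]
  rfl

/-- The left endpoint of the `k`-th interval cut out by the points `s`: the preceding point, or `0`
for the first interval. -/
noncomputable def prevPt {n : ℕ} (s : Fin (n + 1) → ℝ) (k : Fin (n + 1)) : ℝ :=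
  Fin.cases 0 (fun j => s j.castSucc) k

/-- The `k`-th interval cut out by the points `s`: `[0, s₀]` for `k = 0`, and `(s_{k-1}, s_k]`
otherwise. -/
def slab {n : ℕ} (s : Fin (n + 1) → ℝ) (k : Fin (n + 1)) : Set ℝ :=
  Fin.cases (Set.Icc 0 (s 0)) (fun j => Set.Ioc (s j.castSucc) (s j.succ)) k

lemma slab_subset {n : ℕ} (s : Fin (n + 1) → ℝ) (k : Fin (n + 1)) :
    slab s k ⊆ Set.Icc (prevPt s k) (s k) := by
  cases k using Fin.cases with
  | zero => exact subset_rfl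
  | succ j => exact Set.Ioc_subset_Icc_self

lemma prevPt_le {n : ℕ} {s : Fin (n + 1) → ℝ} (hs0 : 0 ≤ s 0) (hs : StrictMono s)
    (k : Fin (n + 1)) : prevPt s k ≤ s k := by
  cases k using Fin.cases with
  | zero => exact hs0
  | succ j => exact (hs Fin.castSucc_lt_succ).le

lemma setIntegral_slab {n : ℕ} {s : Fin (n + 1) → ℝ} (hs0 : 0 ≤ s 0) (hs : StrictMono s)
    (k : Fin (n + 1)) (f : ℝ → ℝ) :
    ∫ x in slab s k, f x = ∫ x in (prevPt s k)..(s k), f x := by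
  rw [intervalIntegral.integral_of_le (prevPt_le hs0 hs k)]
  cases k using Fin.cases with
  | zero => exact integral_Icc_eq_integral_Ioc
  | succ j => rfl

lemma integrableOn_slab {n : ℕ} (s : Fin (n + 1) → ℝ) (k : Fin (n + 1)) {f : ℝ → ℝ}
    (hf : Continuous f) : IntegrableOn f (slab s k) :=
  hf.continuousOn.integrableOn_Icc.mono_set (slab_subset s k)

lemma mem_pi_slab {n : ℕ} (s v : Fin (n + 1) → ℝ) :
    v ∈ Set.univ.pi (slab s) ↔
      0 ≤ v 0 ∧ (∀ k, v k ≤ s k) ∧ ∀ j : Fin n, s j.castSucc < v j.succ := by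
  simp only [Set.mem_univ_pi, Fin.forall_fin_succ (n := n), slab, Fin.cases_zero, Fin.cases_succ,
    Set.mem_Icc, Set.mem_Ioc, forall_and]
  tauto

lemma Hker_zero_left (α : ℝ) {t : ℝ} (ht : 0 ≤ t) : Hker α 0 t = 0 := by
  simp [Hker, min_eq_left ht]

lemma Hker_zero_right (α : ℝ) {s : ℝ} (hs : 0 ≤ s) : Hker α s 0 = 0 := by
  simp [Hker, min_eq_right hs]

/-- Subtracting from each row and column of `(H(s_k, t_l))` the preceding one. -/
lemma det_Hker_diff (α : ℝ) {n : ℕ} (s t : Fin (n + 1) → ℝ) (hs : ∀ k, 0 ≤ s k)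
    (ht : ∀ k, 0 ≤ t k) :
    (Matrix.of fun k l => Hker α (s k) (t l)).det
      = (Matrix.of fun k l => (Hker α (s k) (t l) - Hker α (prevPt s k) (t l))
          - (Hker α (s k) (prevPt t l) - Hker α (prevPt s k) (prevPt t l))).det := by
  have hp : ∀ l, 0 ≤ prevPt s l := by
    intro l
    cases l using Fin.cases with
    | zero => exact le_rfl
    | succ j => exact hs _
  trans (Matrix.of fun k l => Hker α (s k) (t l) - Hker α (prevPt s k) (t l)).det
  · refine Matrix.det_eq_of_forall_row_eq_smul_add_pred (fun _ => 1) ?_ ?_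
    · intro l
      simp [prevPt, Hker_zero_left α (ht l)]
    · intro j l
      simp [prevPt]
  · refine Matrix.det_eq_of_forall_col_eq_smul_add_pred (fun _ => 1) ?_ ?_
    · intro k
      have h1 : prevPt t 0 = 0 := rfl
      simp [h1, Hker_zero_right α (hs k), Hker_zero_right α (hp k)]
    · intro k j
      have h1 : prevPt t j.succ = t j.castSucc := rfl
      simp [h1]

/-- The integral representation for two arbitrary increasing sequences of nonnegative points. -/
lemma det_Hker_eq_integral (α : ℝ) {n : ℕ} {s t : Fin (n + 1) → ℝ} (hs0 : ∀ k, 0 ≤ s k)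
    (ht0 : ∀ k, 0 ≤ t k) (hs : StrictMono s) (ht : StrictMono t) :
    (Matrix.of fun k l => Hker α (s k) (t l)).det
      = ∫ vw : (Fin (n + 1) → ℝ) × (Fin (n + 1) → ℝ) in
          Set.univ.pi (slab s) ×ˢ Set.univ.pi (slab t),
          (Matrix.of fun k l => Kker α (vw.1 k) (vw.2 l)).det := by
  have hK : ∀ x, Continuous fun y => Kker α x y := fun x =>
    (continuous_Kker α).comp (by fun_prop : Continuous fun y : ℝ => (x, y))
  have hcont : Continuous fun vw : (Fin (n + 1) → ℝ) × (Fin (n + 1) → ℝ) =>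
      (Matrix.of fun k l => Kker α (vw.1 k) (vw.2 l)).det := by
    refine Continuous.matrix_det (continuous_matrix fun k l => ?_)
    exact (continuous_Kker α).comp
      (by fun_prop : Continuous fun vw : (Fin (n + 1) → ℝ) × (Fin (n + 1) → ℝ) =>
        (vw.1 k, vw.2 l))
  have hint : IntegrableOn (fun vw : (Fin (n + 1) → ℝ) × (Fin (n + 1) → ℝ) =>
      (Matrix.of fun k l => Kker α (vw.1 k) (vw.2 l)).det)
      (Set.univ.pi (slab s) ×ˢ Set.univ.pi (slab t)) (volume.prod volume) := by
    have hc : IsCompact ((Set.univ.pi fun k => Set.Icc (prevPt s k) (s k)) ×ˢ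
        (Set.univ.pi fun k => Set.Icc (prevPt t k) (t k))) :=
      (isCompact_univ_pi fun k => isCompact_Icc).prod (isCompact_univ_pi fun k => isCompact_Icc)
    exact (hcont.continuousOn.integrableOn_compact hc).mono_set
      (Set.prod_mono (Set.pi_mono fun k _ => slab_subset s k)
        (Set.pi_mono fun k _ => slab_subset t k))
  rw [Measure.volume_eq_prod, setIntegral_prod _ hint, det_Hker_diff α s t hs0 ht0]
  have hinner : ∀ v : Fin (n + 1) → ℝ,
      ∫ w in Set.univ.pi (slab t), (Matrix.of fun k l => Kker α (v k) (w l)).det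
        = (Matrix.of fun k l => Pker α (v k) (t l) - Pker α (v k) (prevPt t l)).det := by
    intro v
    rw [setIntegral_det_col (slab t) (fun k => Kker α (v k))
      fun k l => integrableOn_slab t l (hK _)]
    simp only [setIntegral_slab (ht0 0) ht, integral_Kker]
  simp only [hinner]
  rw [setIntegral_det_row (slab s) (fun l x => Pker α x (t l) - Pker α x (prevPt t l))
    fun k l => integrableOn_slab s k
      ((continuous_Pker_left α _).sub (continuous_Pker_left α _))]
  congr 2
  funext k l
  rw [setIntegral_slab (hs0 0) hs, intervalIntegral.integral_sub
    ((continuous_Pker_left α _).intervalIntegrable _ _)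
    ((continuous_Pker_left α _).intervalIntegrable _ _), integral_Pker, integral_Pker]

/-- Continuous Cauchy–Binet representation of the deleted-row minor: with
`s_k := u_{succAbove i k}` (the points obtained from `(u₁,…,u_{N+1})` by deleting `uᵢ`),
`det (H(s_k, u_l)) = ∫_A det (K(v_k, w_l)) dv dw`, where `A` is the region
`0 ≤ v₁ ≤ s₁ < v₂ ≤ s₂ < ⋯ < v_N ≤ s_N`, `0 ≤ w₁ ≤ u₁ < w₂ ≤ u₂ < ⋯ < w_N ≤ u_N`,
and the integral is with respect to 2N-dimensional Lebesgue measure. -/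
theorem wilson_H_minor_eq_integral_K_minor (α : ℝ) (hα : 0 < α) (N : ℕ) (hN : 1 ≤ N)
    (u : Fin (N + 1) → ℝ) (hu0 : ∀ j, 0 < u j) (hu : StrictMono u)
    (i : Fin (N + 1)) (hi : (i : ℕ) < N) :
    (Matrix.of fun k l : Fin N =>
        Hker α (u (i.succAbove k)) (u (Fin.castSucc l))).det
      = ∫ vw : (Fin N → ℝ) × (Fin N → ℝ) in
          {vw : (Fin N → ℝ) × (Fin N → ℝ) |
            0 ≤ vw.1 ⟨0, by omega⟩ ∧
            (∀ k : Fin N, vw.1 k ≤ u (i.succAbove k)) ∧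
            (∀ (k : Fin N) (h : (k : ℕ) + 1 < N),
              u (i.succAbove k) < vw.1 ⟨(k : ℕ) + 1, h⟩) ∧
            0 ≤ vw.2 ⟨0, by omega⟩ ∧
            (∀ k : Fin N, vw.2 k ≤ u (Fin.castSucc k)) ∧
            (∀ (k : Fin N) (h : (k : ℕ) + 1 < N),
              u (Fin.castSucc k) < vw.2 ⟨(k : ℕ) + 1, h⟩)},
          (Matrix.of fun k l : Fin N => Kker α (vw.1 k) (vw.2 l)).det := by
  obtain ⟨n, rfl⟩ : ∃ n, N = n + 1 := ⟨N - 1, by omega⟩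
  rw [det_Hker_eq_integral α (s := fun k => u (i.succAbove k)) (t := fun k => u k.castSucc)
    (fun k => (hu0 _).le) (fun k => (hu0 _).le) (hu.comp (Fin.strictMono_succAbove i))
    (hu.comp Fin.strictMono_castSucc)]
  congr 2
  -- consecutive pairs are indexed by `Fin n` in `mem_pi_slab`, but by `k` with `k + 1 < n + 1` here
  have hfin : ∀ a b : Fin (n + 1) → ℝ,
      (∀ j : Fin n, a j.castSucc < b j.succ) ↔
        ∀ (k : Fin (n + 1)) (h : (k : ℕ) + 1 < n + 1), a k < b ⟨(k : ℕ) + 1, h⟩ := fun a b =>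
    ⟨fun H k h => H ⟨k, by omega⟩, fun H j => H j.castSucc (by simp)⟩
  ext ⟨v, w⟩
  rw [Set.mem_prod, mem_pi_slab, mem_pi_slab, hfin (fun k => u (i.succAbove k)) v,
    hfin (fun k => u k.castSucc) w, and_assoc, and_assoc]
  rfl
end
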